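/- The Eisenstein series satisfy the Ramanujan system of differential equations: for every τ in the upper half-plane ℍ, E₂'(τ) = (E₂(τ)² − E₄(τ))/12, E₄'(τ) = (E₂(τ)E₄(τ) − E₆(τ))/3, and E₆'(τ) = (E₂(τ)E₆(τ) − E₄(τ)²)/2. -/

import Mathlib

open Complex

noncomputable section

/-- The normalized derivative `F' = (2πi)⁻¹ dF/dτ`. -/
def nderiv (F : ℂ → ℂ) : ℂ → ℂ := fun τ => (2 * Real.pi * Complex.I)⁻¹ * deriv F τ

/-- `q = e^{2πiτ}`. -/
def qq (τ : ℂ) : ℂ := Complex.exp (2 * Real.pi * Complex.I * τ)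

/-- Sum of the `k`-th powers of the positive divisors of `n`. -/
def sigma' (k n : ℕ) : ℕ := ∑ d ∈ n.divisors, d ^ k

/-- The Eisenstein series `E₂`. -/
def E2 : ℂ → ℂ := fun τ => 1 - 24 * ∑' n : ℕ, (sigma' 1 (n + 1) : ℂ) * qq τ ^ (n + 1)

/-- The Eisenstein series `E₄`. -/
def E4 : ℂ → ℂ := fun τ => 1 + 240 * ∑' n : ℕ, (sigma' 3 (n + 1) : ℂ) * qq τ ^ (n + 1)

/-- The Eisenstein series `E₆`. -/
def E6 : ℂ → ℂ := fun τ => 1 - 504 * ∑' n : ℕ, (sigma' 5 (n + 1) : ℂ) * qq τ ^ (n + 1)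

open scoped Manifold MatrixGroups ModularForm Topology ArithmeticFunction.sigma
open Filter
local notation "ℍ" => UpperHalfPlane

/-- The power series `∑ σ_k(n+1) x^(n+1)`. -/
def Sser (k : ℕ) (x : ℂ) : ℂ := ∑' n : ℕ, (sigma' k (n + 1) : ℂ) * x ^ (n + 1)

lemma sigma'_le (k n : ℕ) : sigma' k n ≤ n ^ (k + 1) := by
  have := ArithmeticFunction.sigma_le_pow_succ k n
  simpa [sigma', ArithmeticFunction.sigma_apply] using this

lemma Sser_diff (k : ℕ) : DifferentiableOn ℂ (Sser k) (Metric.ball 0 1) := by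
  intro x hx
  rw [mem_ball_zero_iff] at hx
  obtain ⟨r, hxr, hr1⟩ := exists_between hx
  have hr0 : 0 ≤ r := (norm_nonneg x).trans hxr.le
  have hsum : Summable (fun n : ℕ => ((n + 1 : ℕ) : ℝ) ^ (k + 1) * r ^ (n + 1)) := by
    have := summable_pow_mul_geometric_of_norm_lt_one (R := ℝ) (k + 1) (r := r)
      (by rwa [Real.norm_of_nonneg hr0])
    exact (summable_nat_add_iff (f := fun n : ℕ => (n : ℝ) ^ (k + 1) * r ^ n) 1).mpr this
  have h : DifferentiableOn ℂ (Sser k) (Metric.ball 0 r) := by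
    refine Complex.differentiableOn_tsum_of_summable_norm hsum (fun n => by fun_prop)
      Metric.isOpen_ball ?_
    intro n w hw
    rw [mem_ball_zero_iff] at hw
    rw [norm_mul, norm_pow, Complex.norm_natCast]
    gcongr
    exact_mod_cast sigma'_le k (n + 1)
  exact (h.differentiableAt (Metric.isOpen_ball.mem_nhds (by simpa using hxr))).differentiableWithinAt

lemma Sser_zero (k : ℕ) : Sser k 0 = 0 := by simp [Sser]

lemma qq_norm {τ : ℂ} (h : 0 < τ.im) : ‖qq τ‖ < 1 :=
  UpperHalfPlane.norm_exp_two_pi_I_lt_one ⟨τ, h⟩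

lemma qq_hasDeriv (τ : ℂ) : HasDerivAt qq (2 * Real.pi * I * qq τ) τ := by
  have := ((hasDerivAt_id τ).const_mul (2 * Real.pi * I : ℂ)).cexp
  exact this.congr_deriv (by simp [qq, mul_comm])

lemma qq_tendsto : Tendsto (fun z : ℍ => qq z) UpperHalfPlane.atImInfty (𝓝 0) := by
  rw [tendsto_zero_iff_norm_tendsto_zero]
  have : (fun z : ℍ => ‖qq z‖) = fun z : ℍ => Real.exp (-(2 * Real.pi * z.im)) := by
    ext z
    simp [qq, Complex.norm_exp]
  rw [this]
  refine Real.tendsto_exp_neg_atTop_nhds_zero.comp ?_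
  exact (tendsto_comap.const_mul_atTop (by positivity : 0 < 2 * Real.pi))

lemma Sq_tendsto (k : ℕ) : Tendsto (fun z : ℍ => Sser k (qq z)) UpperHalfPlane.atImInfty (𝓝 0) := by
  have h := ((Sser_diff k).differentiableAt (Metric.isOpen_ball.mem_nhds (by simp : (0 : ℂ) ∈ Metric.ball (0 : ℂ) 1))).continuousAt.tendsto
  rw [Sser_zero] at h
  exact h.comp qq_tendsto

lemma nderiv_tendsto (k : ℕ) (a b : ℂ) :
    Tendsto (fun z : ℍ => nderiv (fun τ => a + b * Sser k (qq τ)) z) UpperHalfPlane.atImInfty (𝓝 0) := by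
  have h := (((Sser_diff k).deriv Metric.isOpen_ball).differentiableAt (Metric.isOpen_ball.mem_nhds (by simp : (0 : ℂ) ∈ Metric.ball (0 : ℂ) 1))).continuousAt.tendsto
  have h2 := ((h.comp qq_tendsto).mul qq_tendsto).const_mul b
  simp only [mul_zero] at h2
  refine h2.congr fun z => ?_
  have hz : qq z ∈ Metric.ball (0 : ℂ) 1 := by simpa using qq_norm z.im_pos
  have hd := ((Sser_diff k).differentiableAt (Metric.isOpen_ball.mem_nhds hz)).hasDerivAt
  have := ((hd.comp (z : ℂ) (qq_hasDeriv z)).const_mul b).const_add a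
  simp only [Function.comp_def] at this
  rw [nderiv, this.deriv, Function.comp_apply]
  have : (Real.pi : ℂ) ≠ 0 := by exact_mod_cast Real.pi_ne_zero
  field_simp

lemma sum_eq (k : ℕ) (z : ℍ) :
    ∑' n : ℕ+, (σ k n : ℂ) * cexp (2 * Real.pi * I * z) ^ (n : ℕ) = Sser k (qq z) := by
  rw [tsum_pnat_eq_tsum_succ (f := fun n : ℕ => (σ k n : ℂ) * cexp (2 * Real.pi * I * z) ^ n)]
  simp [Sser, qq, sigma', ArithmeticFunction.sigma_apply]

lemma E2_S : E2 = fun τ => 1 + (-24) * Sser 1 (qq τ) := by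
  ext τ; simp [E2, Sser]; ring
lemma E4_S : E4 = fun τ => 1 + 240 * Sser 3 (qq τ) := rfl
lemma E6_S : E6 = fun τ => 1 + (-504) * Sser 5 (qq τ) := by
  ext τ; simp [E6, Sser]; ring

lemma E2_eq (z : ℍ) : EisensteinSeries.E2 z = E2 z := by
  rw [EisensteinSeries.E2_eq_tsum_cexp, E2_S]
  have := sum_eq 1 z
  simp only [← this]
  simp; ring

lemma E4_eq (z : ℍ) : ModularForm.E₄ z = E4 z := by
  have := EisensteinSeries.q_expansion_bernoulli (k := 4) (by norm_num) ⟨2, rfl⟩ z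
  refine this.trans ?_
  rw [E4_S]
  simp only [zpow_natCast, sum_eq]
  norm_num [show bernoulli 4 = -1 / 30 by decide +kernel]

lemma E6_eq (z : ℍ) : ModularForm.E₆ z = E6 z := by
  have := EisensteinSeries.q_expansion_bernoulli (k := 6) (by norm_num) ⟨3, rfl⟩ z
  refine this.trans ?_
  rw [E6_S]
  simp only [zpow_natCast, sum_eq]
  norm_num [show bernoulli 6 = 1 / 42 by decide +kernel]
  ring

lemma E_tendsto (k : ℕ) (b : ℂ) :
    Tendsto (fun z : ℍ => 1 + b * Sser k (qq z)) UpperHalfPlane.atImInfty (𝓝 1) := by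
  simpa using ((Sq_tendsto k).const_mul b).const_add 1

open Derivative in
lemma D_eq {F : ℍ → ℂ} {G : ℂ → ℂ} (h : ∀ z : ℍ, F z = G z) (z : ℍ) :
    normalizedDerivOfComplex F z = nderiv G z := by
  rw [normalizedDerivOfComplex, nderiv]
  congr 1
  apply Filter.EventuallyEq.deriv_eq
  filter_upwards [UpperHalfPlane.isOpen_upperHalfPlaneSet.mem_nhds z.im_pos] with w hw
  rw [Function.comp_apply, h, UpperHalfPlane.ofComplex_apply_of_im_pos hw]

lemma vanish {k : ℤ} (hk : k < 12) {f : ℍ → ℂ} (hf : MDiff f)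
    (hs : ∀ γ : SL(2, ℤ), f ∣[k] γ = f) (h0 : Tendsto f UpperHalfPlane.atImInfty (𝓝 0)) :
    f = 0 := by
  let F : CuspForm 𝒮ℒ k :=
    { toFun := f
      slash_action_eq' := by
        rintro _ ⟨γ, rfl⟩
        exact hs γ
      holo' := hf
      zero_at_cusps' := by
        intro c hc
        rw [OnePoint.isZeroAt_iff_forall_SL2Z hc]
        intro γ _
        rw [hs γ]
        exact h0 }
  have := rank_zero_iff_forall_zero.mp (CuspForm.rank_eq_zero_of_weight_lt_twelve hk) F
  ext z
  exact congrArg (fun G : CuspForm 𝒮ℒ k => G z) this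

lemma E4_mdiff : MDiff (ModularForm.E₄ : ℍ → ℂ) := ModularForm.E₄.holo'
lemma E6_mdiff : MDiff (ModularForm.E₆ : ℍ → ℂ) := ModularForm.E₆.holo'

lemma E4_slash (γ : SL(2, ℤ)) : (ModularForm.E₄ : ℍ → ℂ) ∣[(4 : ℤ)] γ = ModularForm.E₄ :=
  ModularForm.E₄.slash_action_eq' _ ⟨γ, rfl⟩
lemma E6_slash (γ : SL(2, ℤ)) : (ModularForm.E₆ : ℍ → ℂ) ∣[(6 : ℤ)] γ = ModularForm.E₆ :=
  ModularForm.E₆.slash_action_eq' _ ⟨γ, rfl⟩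

open Derivative

lemma ram4 : serreDerivative 4 ModularForm.E₄ + (3⁻¹ : ℂ) • (ModularForm.E₆ : ℍ → ℂ) = 0 := by
  refine vanish (k := 6) (by norm_num)
    ((serreDerivative_mdifferentiable 4 E4_mdiff).add (E6_mdiff.const_smul _)) ?_ ?_
  · intro γ
    have h := serreDerivative_slash_invariant (k := 4) E4_mdiff (E4_slash γ)
    rw [SlashAction.add_slash, ModularForm.SL_smul_slash, E6_slash]
    congr 1
  · have h : (serreDerivative 4 ModularForm.E₄ + (3⁻¹ : ℂ) • (ModularForm.E₆ : ℍ → ℂ)) =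
      fun z : ℍ => nderiv E4 z - 4 * 12⁻¹ * E2 z * E4 z + 3⁻¹ * E6 z := by
      ext z
      simp only [Pi.add_apply, Pi.smul_apply, smul_eq_mul, serreDerivative_apply, E2_eq, E4_eq,
        E6_eq, D_eq E4_eq]
    rw [h, E2_S, E4_S, E6_S]
    have := ((nderiv_tendsto 3 1 240).sub (((E_tendsto 1 (-24)).const_mul (4 * 12⁻¹)).mul
      (E_tendsto 3 240))).add ((E_tendsto 5 (-504)).const_mul 3⁻¹)
    convert this using 2
    norm_num

lemma ram6 : serreDerivative 6 ModularForm.E₆ +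
    (2⁻¹ : ℂ) • ((ModularForm.E₄ : ℍ → ℂ) * (ModularForm.E₄ : ℍ → ℂ)) = 0 := by
  refine vanish (k := 8) (by norm_num)
    ((serreDerivative_mdifferentiable 6 E6_mdiff).add ((E4_mdiff.mul E4_mdiff).const_smul _)) ?_ ?_
  · intro γ
    have h := serreDerivative_slash_invariant (k := 6) E6_mdiff (E6_slash γ)
    have h2 := ModularForm.mul_slash_SL2 4 4 γ (ModularForm.E₄ : ℍ → ℂ) (ModularForm.E₄ : ℍ → ℂ)
    rw [E4_slash] at h2
    rw [SlashAction.add_slash, ModularForm.SL_smul_slash]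
    congr 1
    congr 1
  · have h : (serreDerivative 6 ModularForm.E₆ +
      (2⁻¹ : ℂ) • ((ModularForm.E₄ : ℍ → ℂ) * (ModularForm.E₄ : ℍ → ℂ))) =
      fun z : ℍ => nderiv E6 z - 6 * 12⁻¹ * E2 z * E6 z + 2⁻¹ * (E4 z * E4 z) := by
      ext z
      simp only [Pi.add_apply, Pi.smul_apply, Pi.mul_apply, smul_eq_mul, serreDerivative_apply,
        E2_eq, E4_eq, E6_eq, D_eq E6_eq]
    rw [h, E2_S, E4_S, E6_S]
    have := ((nderiv_tendsto 5 1 (-504)).sub (((E_tendsto 1 (-24)).const_mul (6 * 12⁻¹)).mul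
      (E_tendsto 5 (-504)))).add (((E_tendsto 3 240).mul (E_tendsto 3 240)).const_mul 2⁻¹)
    convert this using 2
    norm_num

/-- The derivative of the defect function of `E₂`. -/
lemma D_D2 (γ : SL(2, ℤ)) : MDiff (EisensteinSeries.D2 γ) ∧ ∀ z : ℍ,
    normalizedDerivOfComplex (EisensteinSeries.D2 γ) z =
      - ((γ 1 0 : ℂ) / UpperHalfPlane.denom γ z) ^ 2 := by
  have key (z : ℍ) : HasDerivAt (EisensteinSeries.D2 γ ∘ UpperHalfPlane.ofComplex)
      (2 * Real.pi * I * γ 1 0 * (-(γ 1 0 : ℂ) * (UpperHalfPlane.denom γ z) ^ (-2 : ℤ))) z := by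
    have h := UpperHalfPlane.hasDerivAt_denom_zpow (γ : GL (Fin 2) ℝ) (-1) z
    have h2 := h.const_mul (2 * Real.pi * I * γ 1 0 : ℂ)
    refine (h2.congr_of_eventuallyEq ?_).congr_deriv ?_
    · filter_upwards [UpperHalfPlane.isOpen_upperHalfPlaneSet.mem_nhds z.im_pos] with w hw
      simp [EisensteinSeries.D2, UpperHalfPlane.ofComplex_apply_of_im_pos hw, div_eq_mul_inv]
    · norm_num
  refine ⟨fun z => UpperHalfPlane.mdifferentiableAt_iff.mpr (key z).differentiableAt, fun z => ?_⟩
  rw [normalizedDerivOfComplex, (key z).deriv]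
  have : (Real.pi : ℂ) ≠ 0 := by exact_mod_cast Real.pi_ne_zero
  have hd := UpperHalfPlane.denom_ne_zero (γ : GL (Fin 2) ℝ) z
  rw [zpow_neg]
  field_simp

lemma ram2_alg {X Y e c d p : ℂ} (hp : p ≠ 0) (hd : d ≠ 0)
    (h : Y - (p ^ 2 / 6)⁻¹ * (1 / 2) * -(c / d) ^ 2 - (X + 2 * (I * (p⁻¹ * (1 / 2))) * (c / d) *
      (e - (p ^ 2 / 6)⁻¹ * (1 / 2) * (2 * p * I * c / d))) = 0) :
    X + -(12⁻¹ * ((e - (p ^ 2 / 6)⁻¹ * (1 / 2) * (2 * p * I * c / d)) *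
      (e - (p ^ 2 / 6)⁻¹ * (1 / 2) * (2 * p * I * c / d)))) - (Y + -(12⁻¹ * (e * e))) = 0 := by
  have h1 : (p ^ 2 / 6)⁻¹ * (1 / 2) * (2 * p * I * c / d) = 6 * I * (c / d * p⁻¹) := by
    field_simp
  have h2 : (p ^ 2 / 6)⁻¹ * (1 / 2) * -(c / d) ^ 2 = -3 * (c / d * p⁻¹) ^ 2 := by
    field_simp
    ring
  rw [h1, h2] at h
  rw [h1]
  linear_combination -h + 3 * (c / d * p⁻¹) ^ 2 * I_sq

lemma ram2_slash (γ : SL(2, ℤ)) :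
    (normalizedDerivOfComplex EisensteinSeries.E2 - (12⁻¹ : ℂ) • (EisensteinSeries.E2 *
      EisensteinSeries.E2)) ∣[(4 : ℤ)] γ =
    normalizedDerivOfComplex EisensteinSeries.E2 - (12⁻¹ : ℂ) • (EisensteinSeries.E2 *
      EisensteinSeries.E2) := by
  have h1 := normalizedDerivOfComplex_SL_slash (k := 2) E2_mdifferentiable (γ := γ)
  have h2 := ModularForm.mul_slash_SL2 2 2 γ EisensteinSeries.E2 EisensteinSeries.E2
  have h3 := EisensteinSeries.E2_slash_action γ
  rw [h3] at h1 h2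
  rw [normalizedDerivOfComplex_sub _ _ E2_mdifferentiable ((D_D2 γ).1.const_smul _),
    normalizedDerivOfComplex_smul _ _ (D_D2 γ).1] at h1
  rw [sub_eq_add_neg, SlashAction.add_slash, SlashAction.neg_slash, ModularForm.SL_smul_slash]
  ext z
  have h1z := congrFun h1 z
  have h2z := congrFun h2 z
  norm_num at h1z h2z
  simp only [Pi.add_apply, Pi.neg_apply, Pi.smul_apply, smul_eq_mul, Pi.mul_apply]
  rw [h2z]
  rw [← sub_eq_zero] at h1z
  have hp : (Real.pi : ℂ) ≠ 0 := by exact_mod_cast Real.pi_ne_zero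
  have hd := UpperHalfPlane.denom_ne_zero (γ : GL (Fin 2) ℝ) z
  rw [(D_D2 γ).2 z] at h1z
  simp only [EisensteinSeries.D2, riemannZeta_two] at h1z ⊢
  rw [← sub_eq_zero]
  exact ram2_alg hp hd h1z

lemma ram2 : normalizedDerivOfComplex EisensteinSeries.E2 - (12⁻¹ : ℂ) • (EisensteinSeries.E2 *
      EisensteinSeries.E2) + (12⁻¹ : ℂ) • (ModularForm.E₄ : ℍ → ℂ) = 0 := by
  refine vanish (k := 4) (by norm_num)
    (((normalizedDerivOfComplex_mdifferentiable E2_mdifferentiable).sub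
      ((E2_mdifferentiable.mul E2_mdifferentiable).const_smul _)).add (E4_mdiff.const_smul _)) ?_ ?_
  · intro γ
    rw [SlashAction.add_slash, ModularForm.SL_smul_slash, E4_slash, ram2_slash]
  · have h : (normalizedDerivOfComplex EisensteinSeries.E2 - (12⁻¹ : ℂ) • (EisensteinSeries.E2 *
      EisensteinSeries.E2) + (12⁻¹ : ℂ) • (ModularForm.E₄ : ℍ → ℂ)) =
      fun z : ℍ => nderiv E2 z - 12⁻¹ * (E2 z * E2 z) + 12⁻¹ * E4 z := by
      ext z
      simp only [Pi.add_apply, Pi.sub_apply, Pi.smul_apply, Pi.mul_apply, smul_eq_mul,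
        E2_eq, E4_eq, D_eq E2_eq]
    rw [h, E2_S, E4_S]
    have := ((nderiv_tendsto 1 1 (-24)).sub (((E_tendsto 1 (-24)).mul
      (E_tendsto 1 (-24))).const_mul 12⁻¹)).add ((E_tendsto 3 240).const_mul 12⁻¹)
    convert this using 2
    norm_num

/-- The Ramanujan system of ODEs for the Eisenstein series `E₂`, `E₄`, `E₆`. -/
theorem ramanujan_system :
    ∀ τ : ℂ, 0 < τ.im →
      nderiv E2 τ = (E2 τ ^ 2 - E4 τ) / 12 ∧
      nderiv E4 τ = (E2 τ * E4 τ - E6 τ) / 3 ∧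
      nderiv E6 τ = (E2 τ * E6 τ - E4 τ ^ 2) / 2 := by
  intro τ hτ
  have h2 := congrFun ram2 ⟨τ, hτ⟩
  have h4 := congrFun ram4 ⟨τ, hτ⟩
  have h6 := congrFun ram6 ⟨τ, hτ⟩
  simp only [Pi.add_apply, Pi.sub_apply, Pi.smul_apply, Pi.mul_apply, smul_eq_mul, Pi.zero_apply,
    serreDerivative_apply, E2_eq, E4_eq, E6_eq, D_eq E2_eq, D_eq E4_eq, D_eq E6_eq] at h2 h4 h6
  refine ⟨?_, ?_, ?_⟩
  · linear_combination h2
  · linear_combination h4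
  · linear_combination h6
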